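/- In the setting of Ulam's method for the approximating maps τ_n, let n ≥ N with a_n + D₁ < 1 and let k ≥ 1. (i) For every non-negative, non-increasing f ∈ L¹(I,λ): ess sup (Q^{(k)}(P_{τ_n} f)) ≤ (a_n + D₁) · ess sup f + D · ‖f‖₁. (ii) Consequently, every normalized fixed point f_{n,k} of P^{(k)}_{τ_n} (f_{n,k} constant on each J_i, f_{n,k} ≥ 0, ∫₀¹ f_{n,k} dλ = 1, Q^{(k)}(P_{τ_n} f_{n,k}) = f_{n,k} λ-a.e.) satisfies ess sup f_{n,k} ≤ D / (1 − (a_n + D₁)). -/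

import Mathlib

open MeasureTheory Set Filter

/-- Lebesgue measure on the unit interval `I = [0,1]`. -/
noncomputable def lam : MeasureTheory.Measure ℝ := MeasureTheory.volume.restrict (Set.Icc 0 1)

/-- A piecewise convex map `τ` on `[0,1]` with countably many branches, whose partition
points form a strictly decreasing sequence `1 = a 0 > a 1 > ⋯` tending to `0`; on each
`[a (m+1), a m)` the map is continuous, convex and differentiable, vanishes at the left
endpoint, and has right derivative `d (m+1) = τ'(a (m+1)) > 0` there; there is `N ≥ 1`
with `D₁ = ∑_{m=N+1}^∞ 1/τ'(a m) < 1` and `C = ∑_{m=1}^∞ 1/τ'(a m) < ∞`. -/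
structure PCApprox (τ : ℝ → ℝ) (a d : ℕ → ℝ) (N : ℕ) : Prop where
  mapsTo : Set.MapsTo τ (Set.Icc 0 1) (Set.Icc 0 1)
  a_zero : a 0 = 1
  a_anti : StrictAnti a
  a_lim : Filter.Tendsto a Filter.atTop (nhds 0)
  cont : ∀ m : ℕ, ContinuousOn τ (Set.Ico (a (m+1)) (a m))
  conv : ∀ m : ℕ, ConvexOn ℝ (Set.Ico (a (m+1)) (a m)) τ
  diff : ∀ m : ℕ, ∀ x ∈ Set.Ico (a (m+1)) (a m),
    DifferentiableWithinAt ℝ τ (Set.Ico (a (m+1)) (a m)) x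
  map_a : ∀ m : ℕ, τ (a (m+1)) = 0
  deriv_a : ∀ m : ℕ, HasDerivWithinAt τ (d (m+1)) (Set.Ici (a (m+1))) (a (m+1))
  d_pos : ∀ m : ℕ, 0 < d (m+1)
  N_pos : 1 ≤ N
  sum_d : Summable fun m => 1 / d (m+1)
  D₁_lt : (∑' m : ℕ, 1 / d (m + N + 1)) < 1

/-- `D₁ = ∑_{m=N+1}^∞ 1/τ'(a m)`. -/
noncomputable def D₁ (d : ℕ → ℝ) (N : ℕ) : ℝ := ∑' m : ℕ, 1 / d (m + N + 1)

/-- `C = ∑_{m=1}^∞ 1/τ'(a m)`. -/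
noncomputable def Cconst (d : ℕ → ℝ) : ℝ := ∑' m : ℕ, 1 / d (m + 1)

/-- `D = ∑_{m=1}^N 1/(a m · τ'(a m))`. -/
noncomputable def Dconst (a d : ℕ → ℝ) (N : ℕ) : ℝ :=
  ∑ m ∈ Finset.range N, 1 / (a (m+1) * d (m+1))

/-- The approximating map `τ_n`: `τ_n x = x / a n` for `x < a n`, and `τ_n x = τ x`
for `a n ≤ x`. -/
noncomputable def tauN (τ : ℝ → ℝ) (a : ℕ → ℝ) (n : ℕ) : ℝ → ℝ :=
  fun x => if x < a n then x / a n else τ x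

/-- Essential supremum (with respect to `λ` on `[0,1]`) of a real function, valued in `ℝ≥0∞`. -/
noncomputable def esssup (f : ℝ → ℝ) : ENNReal := essSup (fun x => ENNReal.ofReal (f x)) lam

/-- The `i`-th Ulam interval `J_{i+1} = [i/k, (i+1)/k)` of the uniform partition of `[0,1]`
into `k` subintervals. -/
noncomputable def Jint (k i : ℕ) : Set ℝ := Set.Ico ((i : ℝ) / k) (((i : ℝ) + 1) / k)

/-- The Ulam projection `Q^{(k)} f = ∑_{i=1}^k (k ∫_{J_i} f dλ) · χ_{J_i}` onto functions
constant on the elements of the uniform partition into `k` subintervals. -/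
noncomputable def Qk (k : ℕ) (f : ℝ → ℝ) : ℝ → ℝ := fun x =>
  ∑ i ∈ Finset.range k,
    Set.indicator (Jint k i) (fun _ => (k : ℝ) * ∫ y in Jint k i, f y ∂lam) x

/-- `fnk` is a normalized fixed point of the Ulam operator `P^{(k)}_σ = Q^{(k)} ∘ P_σ`:
it is constant on each `J_i`, non-negative, of integral `1`, and `Q^{(k)} (P_σ fnk) = fnk`
`λ`-a.e. (where the Frobenius–Perron image `P_σ fnk` is realized by a version `g`). -/
def IsUlamFixed (σ : ℝ → ℝ) (k : ℕ) (fnk : ℝ → ℝ) : Prop :=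
  MeasureTheory.Integrable fnk lam ∧
  (∀ i : ℕ, i < k → ∀ x ∈ Jint k i, ∀ y ∈ Jint k i, fnk x = fnk y) ∧
  (∀ x ∈ Set.Icc (0:ℝ) 1, 0 ≤ fnk x) ∧
  (∫ x, fnk x ∂lam) = 1 ∧
  ∃ g : ℝ → ℝ, MeasureTheory.Integrable g lam ∧
    (∀ A : Set ℝ, MeasurableSet A → A ⊆ Set.Icc (0:ℝ) 1 →
      ∫ x in A, g x ∂lam = ∫ x in σ ⁻¹' A, fnk x ∂lam) ∧
    Qk k g =ᵐ[lam] fnk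

/-!
For non-increasing `f ≥ 0`, part (i) is branchwise: convexity bounds the preimage of `J_i` under a
branch by its length divided by the slope at the left endpoint, and `f ≤ ‖f‖₁ / a m` on the first
`N` branches, `f ≤ ess sup f` on the others.

For part (ii) the fixed point has to be shown non-increasing. By convexity the Ulam operator `T`
preserves non-negative non-increasing step functions. Extend a fixed point `w` by `0` and write
`w = u - v` with `u`, `v` non-increasing and minimal. As `w = T u - T v` with `T v` non-increasing,
the decrements of `T u` are at least those of `u`, so `T u - u` is non-increasing; it vanishes at
the end and has sum `0`, hence `T u = u`, and likewise `T v = v`. One of `u`, `v` vanishes on the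
last interval. The branch `x ↦ x / a n` spreads positivity to the right, so that one is zero, and
since `∫ w > 0` it is `v`. Thus `w = u` is non-increasing, and the estimate behind (i) applied to
`w` bounds its maximum.
-/

instance : IsFiniteMeasure lam := by
  unfold lam
  infer_instance

theorem ae_lam_mem_Ico : ∀ᵐ x ∂lam, x ∈ Ico (0 : ℝ) 1 := by
  rw [lam, ← restrict_Ico_eq_restrict_Icc]
  exact ae_restrict_mem measurableSet_Ico

theorem setIntegral_lam {s : Set ℝ} (hs : s ⊆ Icc 0 1) (f : ℝ → ℝ) :
    ∫ x in s, f x ∂lam = ∫ x in s, f x := by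
  rw [lam, Measure.restrict_restrict_of_subset hs]

theorem integrableOn_of_integrable_lam {f : ℝ → ℝ} (hf : Integrable f lam) {s : Set ℝ}
    (hs : s ⊆ Icc 0 1) : IntegrableOn f s :=
  IntegrableOn.mono_set hf hs

theorem setIntegral_Ico_eq_sum {μ : Measure ℝ} {f : ℝ → ℝ} {a : ℕ → ℝ} (ha : Antitone a)
    (hf : Integrable f μ) (n : ℕ) :
    ∫ x in Ico (a n) (a 0), f x ∂μ
      = ∑ m ∈ Finset.range n, ∫ x in Ico (a (m + 1)) (a m), f x ∂μ := by
  induction n with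
  | zero => simp
  | succ n ih =>
    rw [Finset.sum_range_succ, ← ih, add_comm (∫ x in Ico (a n) (a 0), f x ∂μ),
      ← setIntegral_union Ico_disjoint_Ico_same measurableSet_Ico hf.integrableOn
        hf.integrableOn, Ico_union_Ico_eq_Ico (ha n.le_succ) (ha n.zero_le)]

theorem setIntegral_le_setIntegral_of_antitoneOn {f : ℝ → ℝ} {S A B : Set ℝ} {u v : ℝ}
    (hf : AntitoneOn f S) (hf0 : ∀ x ∈ S, 0 ≤ f x) (hfi : IntegrableOn f S)
    (hA : MeasurableSet A) (hB : MeasurableSet B) (hAS : A ⊆ S) (hBS : B ⊆ S) (hvS : v ∈ S)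
    (huv : u ≤ v) (hAv : A ⊆ Ico v (v + (v - u))) (huB : Ico u v ⊆ B) :
    ∫ x in A, f x ≤ ∫ x in B, f x := by
  have hA_lt_top : volume A < ⊤ := (measure_mono hAv).trans_lt measure_Ico_lt_top
  have hA_vol : volume.real A ≤ v - u := by
    refine (measureReal_mono hAv measure_Ico_lt_top.ne).trans_eq ?_
    rw [Real.volume_real_Ico_of_le (by linarith)]
    ring
  calc ∫ x in A, f x
      ≤ ∫ _ in A, f v :=
        setIntegral_mono_on (hfi.mono_set hAS) (integrableOn_const hA_lt_top.ne) hA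
          fun x hx => hf hvS (hAS hx) (hAv hx).1
    _ = volume.real A * f v := by rw [setIntegral_const, smul_eq_mul]
    _ ≤ (v - u) * f v := mul_le_mul_of_nonneg_right hA_vol (hf0 v hvS)
    _ = ∫ _ in Ico u v, f v := by
        rw [setIntegral_const, smul_eq_mul, Real.volume_real_Ico_of_le huv]
    _ ≤ ∫ x in Ico u v, f x :=
        setIntegral_mono_on (integrableOn_const measure_Ico_lt_top.ne)
          (hfi.mono_set (huB.trans hBS)) measurableSet_Ico
          fun x hx => hf (hBS (huB hx)) hvS hx.2.le
    _ ≤ ∫ x in B, f x :=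
        setIntegral_mono_set (hfi.mono_set hBS)
          (ae_restrict_of_forall_mem hB fun x hx => hf0 x (hBS hx)) huB.eventuallyLE

/-- An increasing convex branch `φ` on `[l, r)`, starting from `0` with right derivative `s > 0`.
The model is the restriction of a piecewise convex map to one interval of its partition. -/
structure IsConvexBranch (φ : ℝ → ℝ) (l r s : ℝ) : Prop where
  lt : l < r
  continuousOn : ContinuousOn φ (Ico l r)
  convexOn : ConvexOn ℝ (Ico l r) φ
  map_left : φ l = 0
  slope_pos : 0 < s
  hasDerivWithinAt : HasDerivWithinAt φ s (Ici l) l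

namespace IsConvexBranch

variable {φ : ℝ → ℝ} {l r s p q t x y c : ℝ}

theorem mul_sub_le (h : IsConvexBranch φ l r s) (hx : x ∈ Ico l r) (hy : y ∈ Ico l r)
    (hxy : x ≤ y) : s * (y - x) ≤ φ y - φ x := by
  rcases hxy.eq_or_lt with rfl | hxy
  · simp
  have hl : l ∈ Ico l r := ⟨le_rfl, h.lt⟩
  have le_slope_left {z : ℝ} (hz : z ∈ Ico l r) (hlz : l < z) :
      s ≤ (φ z - φ l) / (z - l) := by
    simpa only [slope_def_field] using h.convexOn.le_slope_of_hasDerivWithinAt_Ioi hl hz hlz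
      (h.hasDerivWithinAt.mono Ioi_subset_Ici_self)
  rw [← le_div_iff₀ (sub_pos.2 hxy)]
  rcases hx.1.eq_or_lt with rfl | hlx
  · exact le_slope_left hy hxy
  · exact (le_slope_left hx hlx).trans (h.convexOn.slope_mono_adjacent hl hy hlx hxy)

theorem strictMonoOn (h : IsConvexBranch φ l r s) : StrictMonoOn φ (Ico l r) :=
  fun _ hx _ hy hxy =>
    sub_pos.1 ((mul_pos h.slope_pos (sub_pos.2 hxy)).trans_le (h.mul_sub_le hx hy hxy.le))

theorem nonneg (h : IsConvexBranch φ l r s) (hx : x ∈ Ico l r) : 0 ≤ φ x :=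
  h.map_left ▸ h.strictMonoOn.monotoneOn ⟨le_rfl, h.lt⟩ hx hx.1

theorem map_lt_of_forall_le (h : IsConvexBranch φ l r s) (hc : ∀ y ∈ Ico l r, φ y ≤ c)
    (hx : x ∈ Ico l r) : φ x < c := by
  obtain ⟨y, hxy, hyr⟩ := exists_between hx.2
  have hy : y ∈ Ico l r := ⟨hx.1.trans hxy.le, hyr⟩
  exact (h.strictMonoOn hx hy hxy).trans_le (hc y hy)

theorem exists_map_eq (h : IsConvexBranch φ l r s) (hy : y ∈ Ico l r) (hc : 0 ≤ c)
    (hcy : c ≤ φ y) : ∃ x ∈ Icc l y, φ x = c :=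
  intermediate_value_Icc hy.1 (h.continuousOn.mono fun _ hz => ⟨hz.1, hz.2.trans_lt hy.2⟩)
    ⟨h.map_left.trans_le hc, hcy⟩

theorem measurableSet_inter_preimage (h : IsConvexBranch φ l r s) (p q : ℝ) :
    MeasurableSet (Ico l r ∩ φ ⁻¹' Ico p q) := by
  refine OrdConnected.measurableSet ⟨fun x hx y hy z hz => ?_⟩
  have hz' : z ∈ Ico l r := ⟨hx.1.1.trans hz.1, hz.2.trans_lt hy.1.2⟩
  exact ⟨hz', hx.2.1.trans (h.strictMonoOn.monotoneOn hx.1 hz' hz.1),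
    (h.strictMonoOn.monotoneOn hz' hy.1 hz.2).trans_lt hy.2.2⟩

theorem volume_real_inter_preimage_le (h : IsConvexBranch φ l r s) (hpq : p ≤ q) :
    volume.real (Ico l r ∩ φ ⁻¹' Ico p q) ≤ (q - p) / s := by
  have sub_le {x y : ℝ} (hx : x ∈ Ico l r ∩ φ ⁻¹' Ico p q)
      (hy : y ∈ Ico l r ∩ φ ⁻¹' Ico p q) : y - x ≤ (q - p) / s := by
    rcases le_total x y with hxy | hyx
    · rw [le_div_iff₀' h.slope_pos]
      linarith [h.mul_sub_le hx.1 hy.1 hxy, hx.2.1, hy.2.2]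
    · exact (sub_nonpos.2 hyx).trans (div_nonneg (sub_nonneg.2 hpq) h.slope_pos.le)
  refine ENNReal.toReal_le_of_le_ofReal (div_nonneg (sub_nonneg.2 hpq) h.slope_pos.le)
    ((Real.volume_le_diam _).trans (Metric.ediam_le fun x hx y hy => ?_))
  rw [edist_dist, Real.dist_eq]
  exact ENNReal.ofReal_le_ofReal (abs_sub_le_iff.2 ⟨sub_le hy hx, sub_le hx hy⟩)

-- The slope of `φ` over `[v, x]` is at least its slope over `[u, v]`, where `φ u = p`, `φ v = q`.
theorem exists_Ico_subset_inter_preimage (h : IsConvexBranch φ l r s) (hp : 0 ≤ p) (hpq : p < q)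
    (htq : t - q ≤ q - p) (hne : (Ico l r ∩ φ ⁻¹' Ico q t).Nonempty) :
    ∃ u v, u < v ∧ v ∈ Ico l r ∧ Ico u v ⊆ Ico l r ∩ φ ⁻¹' Ico p q ∧
      Ico l r ∩ φ ⁻¹' Ico q t ⊆ Ico v (v + (v - u)) := by
  obtain ⟨y, hy, hqy, -⟩ := hne
  obtain ⟨v, hv, rfl⟩ := h.exists_map_eq hy (hp.trans hpq.le) hqy
  have hv' : v ∈ Ico l r := ⟨hv.1, hv.2.trans_lt hy.2⟩
  obtain ⟨u, hu, rfl⟩ := h.exists_map_eq hv' hp hpq.le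
  have hu' : u ∈ Ico l r := ⟨hu.1, hu.2.trans_lt hv'.2⟩
  have huv : u < v := (h.strictMonoOn.lt_iff_lt hu' hv').1 hpq
  refine ⟨u, v, huv, hv', fun x hx => ?_, fun x hx => ?_⟩
  · have hx' : x ∈ Ico l r := ⟨hu'.1.trans hx.1, hx.2.trans hv'.2⟩
    exact ⟨hx', h.strictMonoOn.monotoneOn hu' hx' hx.1, h.strictMonoOn hx' hv' hx.2⟩
  · have hvx : v ≤ x := (h.strictMonoOn.le_iff_le hv' hx.1).1 hx.2.1
    refine ⟨hvx, ?_⟩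
    rcases hvx.eq_or_lt with rfl | hvx
    · linarith
    have hslope := h.convexOn.slope_mono_adjacent hu' hx.1 huv hvx
    rw [div_le_div_iff₀ (sub_pos.2 huv) (sub_pos.2 hvx)] at hslope
    have hlt : φ x - φ v < φ v - φ u := by linarith [hx.2.2]
    have : x - v < v - u := by
      by_contra! hle
      nlinarith
    linarith

theorem setIntegral_inter_preimage_le_of_antitoneOn (h : IsConvexBranch φ l r s) {f : ℝ → ℝ}
    (hf : AntitoneOn f (Ico l r)) (hf0 : ∀ x ∈ Ico l r, 0 ≤ f x) (hfi : IntegrableOn f (Ico l r))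
    (hp : 0 ≤ p) (hpq : p < q) (htq : t - q ≤ q - p) :
    ∫ x in Ico l r ∩ φ ⁻¹' Ico q t, f x ≤ ∫ x in Ico l r ∩ φ ⁻¹' Ico p q, f x := by
  rcases (Ico l r ∩ φ ⁻¹' Ico q t).eq_empty_or_nonempty with hE | hE
  · rw [hE, setIntegral_empty]
    exact setIntegral_nonneg (h.measurableSet_inter_preimage p q) fun x hx => hf0 x hx.1
  · obtain ⟨u, v, huv, hv, hsub, hsup⟩ := h.exists_Ico_subset_inter_preimage hp hpq htq hE
    exact setIntegral_le_setIntegral_of_antitoneOn hf hf0 hfi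
      (h.measurableSet_inter_preimage q t) (h.measurableSet_inter_preimage p q)
      inter_subset_left inter_subset_left hv huv.le hsup hsub

theorem setIntegral_inter_preimage_le (h : IsConvexBranch φ l r s) {f : ℝ → ℝ} {B : ℝ}
    (hfi : IntegrableOn f (Ico l r)) (hB : 0 ≤ B) (hfB : ∀ᵐ x, x ∈ Ico l r → f x ≤ B)
    (hpq : p ≤ q) : ∫ x in Ico l r ∩ φ ⁻¹' Ico p q, f x ≤ (q - p) / s * B := by
  have hfin : volume (Ico l r ∩ φ ⁻¹' Ico p q) ≠ ⊤ :=
    measure_ne_top_of_subset inter_subset_left measure_Ico_lt_top.ne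
  calc ∫ x in Ico l r ∩ φ ⁻¹' Ico p q, f x
      ≤ ∫ _ in Ico l r ∩ φ ⁻¹' Ico p q, B :=
        setIntegral_mono_on_ae (hfi.mono_set inter_subset_left) (integrableOn_const hfin)
          (h.measurableSet_inter_preimage p q)
          (hfB.mono fun x hx hxE => hx hxE.1)
    _ = volume.real (Ico l r ∩ φ ⁻¹' Ico p q) * B := by rw [setIntegral_const, smul_eq_mul]
    _ ≤ (q - p) / s * B :=
        mul_le_mul_of_nonneg_right (h.volume_real_inter_preimage_le hpq) hB

end IsConvexBranch

section UlamPartition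

open scoped Function

variable {k i : ℕ} {x : ℝ}

theorem mem_Jint_iff (hk : 0 < k) (hx : 0 ≤ x) : x ∈ Jint k i ↔ ⌊k * x⌋₊ = i := by
  have hk' : (0 : ℝ) < k := Nat.cast_pos.2 hk
  rw [Nat.floor_eq_iff (by positivity), Jint, mem_Ico, div_le_iff₀' hk', lt_div_iff₀' hk']

theorem measurableSet_Jint : MeasurableSet (Jint k i) :=
  measurableSet_Ico

theorem nonneg_of_mem_Jint (hx : x ∈ Jint k i) : 0 ≤ x :=
  (by positivity : (0 : ℝ) ≤ i / k).trans hx.1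

theorem Jint_subset_Ico (hi : i < k) : Jint k i ⊆ Ico 0 1 := fun x hx =>
  ⟨nonneg_of_mem_Jint hx, hx.2.trans_le <| div_le_one_of_le₀ (by exact_mod_cast hi) k.cast_nonneg⟩

theorem pairwise_disjoint_Jint (hk : 0 < k) : Pairwise (Disjoint on Jint k) := fun _ _ hij =>
  disjoint_left.2 fun _ hxi hxj => hij <|
    ((mem_Jint_iff hk (nonneg_of_mem_Jint hxi)).1 hxi).symm.trans
      ((mem_Jint_iff hk (nonneg_of_mem_Jint hxj)).1 hxj)

theorem natFloor_mul_lt (hk : 0 < k) (hx : x ∈ Ico (0 : ℝ) 1) : ⌊k * x⌋₊ < k := by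
  rw [Nat.floor_lt (mul_nonneg k.cast_nonneg hx.1)]
  exact mul_lt_of_lt_one_right (Nat.cast_pos.2 hk) hx.2

theorem mem_Jint_natFloor (hk : 0 < k) (hx : 0 ≤ x) : x ∈ Jint k ⌊k * x⌋₊ :=
  (mem_Jint_iff hk hx).2 rfl

theorem Qk_apply (hk : 0 < k) (hx : x ∈ Ico (0 : ℝ) 1) (g : ℝ → ℝ) :
    Qk k g x = k * ∫ y in Jint k ⌊k * x⌋₊, g y ∂lam := by
  rw [Qk, Finset.sum_eq_single_of_mem _ (Finset.mem_range.2 (natFloor_mul_lt hk hx)),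
    indicator_of_mem (mem_Jint_natFloor hk hx.1)]
  intro i _ hi
  exact indicator_of_notMem (fun hxi => hi ((mem_Jint_iff hk hx.1).1 hxi).symm) _

end UlamPartition

/-- `g` is a version of the Frobenius–Perron image `P_σ f`. -/
def IsPerronImage (σ f g : ℝ → ℝ) : Prop :=
  Integrable g lam ∧ ∀ A : Set ℝ, MeasurableSet A → A ⊆ Icc (0 : ℝ) 1 →
    ∫ x in A, g x ∂lam = ∫ x in σ ⁻¹' A, f x ∂lam

/-- The step function on `[0, 1)` with value `w i` on the `i`-th Ulam interval. Sequences indexed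
by all of `ℕ` encode step functions; only the first `k` entries matter. -/
noncomputable def ulamStep (k : ℕ) (w : ℕ → ℝ) (x : ℝ) : ℝ :=
  w ⌊k * x⌋₊

/-- The value of `Q^{(k)} (P_σ f)` on the `j`-th Ulam interval, computed without reference to a
version of `P_σ f`. -/
noncomputable def ulamCoeff (σ : ℝ → ℝ) (k : ℕ) (f : ℝ → ℝ) (j : ℕ) : ℝ :=
  k * ∫ x in σ ⁻¹' Jint k j, f x ∂lam

section UlamOperator

open scoped Function

variable {σ f g : ℝ → ℝ} {k j : ℕ} {w : ℕ → ℝ}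

theorem integrable_ulamStep (k : ℕ) (w : ℕ → ℝ) : Integrable (ulamStep k w) lam := by
  have hmeas : Measurable (ulamStep k w) :=
    measurable_from_nat.comp (Nat.measurable_floor.comp (measurable_const.mul measurable_id))
  refine .of_bound hmeas.aestronglyMeasurable (∑ i ∈ Finset.range (k + 1), |w i|) ?_
  filter_upwards [ae_lam_mem_Ico] with x hx
  have hfloor : ⌊k * x⌋₊ ≤ k :=
    Nat.floor_le_of_le (mul_le_of_le_one_right k.cast_nonneg hx.2.le)
  exact Finset.single_le_sum (f := fun i => |w i|) (fun i _ => abs_nonneg _)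
    (Finset.mem_range_succ_iff.2 hfloor)

theorem antitone_ulamStep (hw : Antitone w) : Antitone (ulamStep k w) := fun _ _ hxy =>
  hw (Nat.floor_mono (mul_le_mul_of_nonneg_left hxy k.cast_nonneg))

theorem IsPerronImage.Qk_ae_eq (h : IsPerronImage σ f g) (hk : 0 < k) :
    Qk k g =ᵐ[lam] ulamStep k (ulamCoeff σ k f) := by
  filter_upwards [ae_lam_mem_Ico] with x hx
  rw [Qk_apply hk hx, h.2 _ measurableSet_Jint
    ((Jint_subset_Ico (natFloor_mul_lt hk hx)).trans Ico_subset_Icc_self)]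
  rfl

theorem ulamCoeff_congr_ae (h : f =ᵐ[lam] g) : ulamCoeff σ k f = ulamCoeff σ k g := by
  ext j
  rw [ulamCoeff, integral_congr_ae (ae_restrict_of_ae h), ulamCoeff]

theorem ulamCoeff_eq_zero (hk : 0 < k) (hσ : MapsTo σ (Ico 0 1) (Ico 0 1)) (hj : k ≤ j) :
    ulamCoeff σ k f j = 0 := by
  have hnull : lam (σ ⁻¹' Jint k j) = 0 := by
    rw [measure_eq_zero_iff_ae_notMem]
    filter_upwards [ae_lam_mem_Ico] with x hx hxj
    have hfloor := natFloor_mul_lt hk (hσ hx)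
    rw [(mem_Jint_iff hk (hσ hx).1).1 hxj] at hfloor
    exact hfloor.not_ge hj
  rw [ulamCoeff, setIntegral_measure_zero _ hnull, mul_zero]

theorem sum_ulamCoeff (hk : 0 < k) (hσ : MapsTo σ (Ico 0 1) (Ico 0 1)) (hσm : AEMeasurable σ lam)
    (hf : Integrable f lam) :
    ∑ j ∈ Finset.range k, ulamCoeff σ k f j = k * ∫ x, f x ∂lam := by
  have hcover : (⋃ j : Fin k, σ ⁻¹' Jint k j) =ᵐ[lam] univ := by
    rw [eventuallyEq_univ]
    filter_upwards [ae_lam_mem_Ico] with x hx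
    exact mem_iUnion.2 ⟨⟨_, natFloor_mul_lt hk (hσ hx)⟩, mem_Jint_natFloor hk (hσ hx).1⟩
  have hdisj : Pairwise (AEDisjoint lam on fun j : Fin k => σ ⁻¹' Jint k j) := fun i j hij =>
    ((pairwise_disjoint_Jint hk (Fin.val_ne_of_ne hij)).preimage σ).aedisjoint
  calc ∑ j ∈ Finset.range k, ulamCoeff σ k f j
      = k * ∑ j : Fin k, ∫ x in σ ⁻¹' Jint k j, f x ∂lam := by
        rw [Finset.sum_range, Finset.mul_sum]
        rfl
    _ = k * ∫ x in ⋃ j : Fin k, σ ⁻¹' Jint k j, f x ∂lam := by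
        rw [integral_iUnion_ae
          (fun j => hσm.nullMeasurableSet_preimage measurableSet_Jint)
          hdisj hf.integrableOn, tsum_fintype]
    _ = k * ∫ x, f x ∂lam := by rw [setIntegral_congr_set hcover, setIntegral_univ]

theorem ulamCoeff_id_ulamStep (hj : j < k) : ulamCoeff id k (ulamStep k w) j = w j := by
  have hk : 0 < k := hj.pos
  have : (0 : ℝ) < k := Nat.cast_pos.2 hk
  have heq : EqOn (ulamStep k w) (fun _ => w j) (Jint k j) := fun x hx =>
    congrArg w ((mem_Jint_iff hk (nonneg_of_mem_Jint hx)).1 hx)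
  rw [ulamCoeff, preimage_id, setIntegral_lam ((Jint_subset_Ico hj).trans Ico_subset_Icc_self),
    setIntegral_congr_fun measurableSet_Jint heq, setIntegral_const, Jint,
    Real.volume_real_Ico_of_le (by gcongr; linarith), smul_eq_mul]
  field_simp
  ring

theorem mul_integral_ulamStep (hk : 0 < k) (w : ℕ → ℝ) :
    k * ∫ x, ulamStep k w x ∂lam = ∑ j ∈ Finset.range k, w j := by
  rw [← sum_ulamCoeff hk (mapsTo_id _) aemeasurable_id (integrable_ulamStep k w)]
  exact Finset.sum_congr rfl fun j hj => ulamCoeff_id_ulamStep (Finset.mem_range.1 hj)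

end UlamOperator

/-- The Ulam operator `P^{(k)}_σ` on step functions, as a linear operator on the sequences of their
values. -/
noncomputable def ulamOp (σ : ℝ → ℝ) (k : ℕ) : (ℕ → ℝ) →ₗ[ℝ] (ℕ → ℝ) where
  toFun w := ulamCoeff σ k (ulamStep k w)
  map_add' v w := by
    ext j
    simp only [ulamCoeff, Pi.add_apply, ← mul_add]
    rw [← integral_add (integrable_ulamStep k v).integrableOn
      (integrable_ulamStep k w).integrableOn]
    rfl
  map_smul' c w := by
    ext j
    simp only [ulamCoeff, Pi.smul_apply, smul_eq_mul, RingHom.id_apply]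
    rw [mul_left_comm c, ← integral_const_mul c]
    rfl

/-- The decreasing part of the sequence `w` on `{0, …, k}`, normalized to vanish from `k` on. If
`w` vanishes from `k` on, then `w = negVariation k w - negVariation k (-w)` is its Jordan
decomposition into two non-increasing sequences. -/
def negVariation (k : ℕ) (w : ℕ → ℝ) (i : ℕ) : ℝ :=
  ∑ m ∈ Finset.Ico i k, (w m - w (m + 1))⁺

section NegVariation

variable {k i : ℕ} {w : ℕ → ℝ}

theorem negVariation_eq_zero (w : ℕ → ℝ) (hi : k ≤ i) : negVariation k w i = 0 := by
  rw [negVariation, Finset.Ico_eq_empty_of_le hi, Finset.sum_empty]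

theorem negVariation_sub_succ (w : ℕ → ℝ) (hi : i < k) :
    negVariation k w i - negVariation k w (i + 1) = (w i - w (i + 1))⁺ := by
  rw [negVariation, Finset.sum_eq_sum_Ico_succ_bot hi, negVariation, add_sub_cancel_right]

theorem negVariation_pred (hk : 0 < k) (w : ℕ → ℝ) :
    negVariation k w (k - 1) = (w (k - 1) - w k)⁺ := by
  have h := negVariation_sub_succ w (Nat.sub_one_lt_of_lt hk)
  rwa [Nat.sub_add_cancel hk, negVariation_eq_zero w le_rfl, sub_zero] at h

theorem negVariation_nonneg (k : ℕ) (w : ℕ → ℝ) : 0 ≤ negVariation k w := fun _ =>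
  Finset.sum_nonneg fun _ _ => posPart_nonneg _

theorem antitone_negVariation (k : ℕ) (w : ℕ → ℝ) : Antitone (negVariation k w) := fun _ _ hij =>
  Finset.sum_le_sum_of_subset_of_nonneg (Finset.Ico_subset_Ico_left hij)
    fun _ _ _ => posPart_nonneg _

theorem negVariation_sub_negVariation_neg (hw : ∀ j, k ≤ j → w j = 0) :
    negVariation k w - negVariation k (-w) = w := by
  ext i
  rcases le_or_gt k i with hi | hi
  · rw [Pi.sub_apply, negVariation_eq_zero _ hi, negVariation_eq_zero _ hi, hw i hi, sub_zero]
  calc negVariation k w i - negVariation k (-w) i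
      = ∑ m ∈ Finset.Ico i k, -(w (m + 1) - w m) := by
        rw [negVariation, negVariation, ← Finset.sum_sub_distrib]
        refine Finset.sum_congr rfl fun m _ => ?_
        rw [Pi.neg_apply, Pi.neg_apply, neg_sub_neg, ← neg_sub (w m), posPart_neg,
          posPart_sub_negPart, neg_neg]
    _ = w i := by rw [Finset.sum_neg_distrib, Finset.sum_Ico_sub w hi.le, hw k le_rfl]; ring

end NegVariation

/-- A linear operator on sequences supported in `{0, …, k - 1}` which preserves sums and the cone of
non-negative non-increasing sequences, and on that cone moves positivity one place to the right. -/
structure IsMonotoneMarkov (k : ℕ) (T : (ℕ → ℝ) →ₗ[ℝ] (ℕ → ℝ)) : Prop where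
  antitone_map {u : ℕ → ℝ} : Antitone u → 0 ≤ u → Antitone (T u)
  map_eq_zero (u : ℕ → ℝ) {j : ℕ} : k ≤ j → T u j = 0
  sum_map (u : ℕ → ℝ) : ∑ j ∈ Finset.range k, T u j = ∑ j ∈ Finset.range k, u j
  map_succ_pos {u : ℕ → ℝ} {m : ℕ} : Antitone u → 0 ≤ u → m + 1 < k → 0 < u m → 0 < T u (m + 1)

theorem nonneg_of_antitone_of_eq_zero {k : ℕ} {u : ℕ → ℝ} (hu : Antitone u)
    (hzero : ∀ j, k ≤ j → u j = 0) : 0 ≤ u := fun j =>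
  (hzero _ (le_max_right j k)).ge.trans (hu (le_max_left j k))

namespace IsMonotoneMarkov

variable {k : ℕ} {T : (ℕ → ℝ) →ₗ[ℝ] (ℕ → ℝ)} {u w : ℕ → ℝ}

theorem map_negVariation (hT : IsMonotoneMarkov k T) (hw : T w = w) :
    T (negVariation k w) = negVariation k w := by
  set u := negVariation k w with hu
  set v := negVariation k (-w)
  have hTu : Antitone (T u) :=
    hT.antitone_map (antitone_negVariation k w) (negVariation_nonneg k w)
  have hTv : Antitone (T v) :=
    hT.antitone_map (antitone_negVariation k (-w)) (negVariation_nonneg k (-w))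
  have huvw : T u - T v = w := by
    rw [← map_sub, negVariation_sub_negVariation_neg fun j hj => hw ▸ hT.map_eq_zero w hj, hw]
  have hzero : ∀ j, k ≤ j → (T u - u) j = 0 := fun j hj => by
    rw [Pi.sub_apply, hT.map_eq_zero u hj, hu, negVariation_eq_zero w hj, sub_zero]
  have hanti : Antitone (T u - u) := antitone_nat_of_succ_le fun i => by
    rcases le_or_gt k i with hi | hi
    · rw [hzero i hi, hzero (i + 1) (by lia)]
    have hincr : (w i - w (i + 1))⁺ ≤ T u i - T u (i + 1) := by
      refine sup_le ?_ (sub_nonneg.2 (hTu i.le_succ))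
      rw [← huvw, Pi.sub_apply, Pi.sub_apply]
      linarith [hTv i.le_succ]
    rw [← negVariation_sub_succ w hi, ← hu] at hincr
    rw [Pi.sub_apply, Pi.sub_apply]
    linarith
  have hsum : ∑ j ∈ Finset.range k, (T u - u) j = 0 := by
    simp only [Pi.sub_apply, Finset.sum_sub_distrib, hT.sum_map, sub_self]
  rw [Finset.sum_eq_zero_iff_of_nonneg
    fun j _ => nonneg_of_antitone_of_eq_zero hanti hzero j] at hsum
  refine sub_eq_zero.1 (funext fun j => ?_)
  rcases lt_or_ge j k with hj | hj
  · exact hsum j (Finset.mem_range.2 hj)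
  · exact hzero j hj

theorem eq_zero_of_map_eq (hT : IsMonotoneMarkov k T) (hu : Antitone u) (hu0 : 0 ≤ u)
    (hTu : T u = u) (hlast : u (k - 1) = 0) : u = 0 := by
  rcases k.eq_zero_or_pos with rfl | hk
  · exact funext fun j => hTu ▸ hT.map_eq_zero u j.zero_le
  have hfirst : u 0 = 0 := by
    by_contra hne
    have hpos : ∀ m < k, 0 < u m := by
      intro m hm
      induction m with
      | zero => exact (hu0 0).lt_of_ne' hne
      | succ m ih => exact hTu ▸ hT.map_succ_pos hu hu0 hm (ih (by lia))
    exact (hpos (k - 1) (Nat.sub_one_lt_of_lt hk)).ne' hlast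
  exact funext fun j => le_antisymm ((hu j.zero_le).trans_eq hfirst) (hu0 j)

theorem negVariation_eq_zero_of_map_eq (hT : IsMonotoneMarkov k T) (hk : 0 < k) (hw : T w = w)
    (hlast : w (k - 1) ≤ 0) : negVariation k w = 0 := by
  refine hT.eq_zero_of_map_eq (antitone_negVariation k w) (negVariation_nonneg k w)
    (hT.map_negVariation hw) ?_
  have hwk : w k = 0 := hw ▸ hT.map_eq_zero w le_rfl
  rwa [negVariation_pred hk, hwk, sub_zero, posPart_eq_zero]

theorem antitone_of_map_eq (hT : IsMonotoneMarkov k T) (hk : 0 < k) (hw : T w = w)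
    (hsum : 0 < ∑ j ∈ Finset.range k, w j) : Antitone w := by
  have hjordan : negVariation k w - negVariation k (-w) = w :=
    negVariation_sub_negVariation_neg fun j hj => hw ▸ hT.map_eq_zero w hj
  rcases le_total (w (k - 1)) 0 with hlast | hlast
  · rw [hT.negVariation_eq_zero_of_map_eq hk hw hlast, zero_sub] at hjordan
    rw [← hjordan] at hsum
    exact absurd hsum (Finset.sum_nonpos fun j _ =>
      neg_nonpos.2 (negVariation_nonneg k (-w) j)).not_gt
  · rw [hT.negVariation_eq_zero_of_map_eq hk (w := -w) (by rw [map_neg, hw])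
      (neg_nonpos.2 hlast), sub_zero] at hjordan
    exact hjordan ▸ antitone_negVariation k w

end IsMonotoneMarkov

theorem le_integral_div_of_antitoneOn {f : ℝ → ℝ} {c x : ℝ} (hf : AntitoneOn f (Icc 0 1))
    (hf0 : ∀ x ∈ Icc (0 : ℝ) 1, 0 ≤ f x) (hfi : Integrable f lam) (hc : 0 < c) (hcx : c ≤ x)
    (hx : x ≤ 1) : f x ≤ (∫ y, f y ∂lam) / c := by
  have hsub : Ico 0 c ⊆ Icc 0 1 := fun y hy => ⟨hy.1, hy.2.le.trans (hcx.trans hx)⟩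
  rw [le_div_iff₀' hc]
  calc c * f x = ∫ _ in Ico 0 c, f x := by
        rw [setIntegral_const, Real.volume_real_Ico_of_le hc.le, sub_zero, smul_eq_mul]
    _ ≤ ∫ y in Ico 0 c, f y :=
        setIntegral_mono_on (integrableOn_const measure_Ico_lt_top.ne)
          (integrableOn_of_integrable_lam hfi hsub) measurableSet_Ico
          fun y hy => hf (hsub hy) ⟨hc.le.trans hcx, hx⟩ (hy.2.le.trans hcx)
    _ = ∫ y in Ico 0 c, f y ∂lam := (setIntegral_lam hsub f).symm
    _ ≤ ∫ y, f y ∂lam :=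
        setIntegral_le_integral hfi <|
          ae_lam_mem_Ico.mono fun y hy => hf0 y (Ico_subset_Icc_self hy)

namespace IsConvexBranch

variable {φ f : ℝ → ℝ} {l r s B : ℝ} {k : ℕ}

theorem antitone_setIntegral_inter_preimage_Jint (h : IsConvexBranch φ l r s) (hk : 0 < k)
    (hlr : Ico l r ⊆ Icc 0 1) (hf : AntitoneOn f (Icc 0 1)) (hf0 : ∀ x ∈ Icc (0 : ℝ) 1, 0 ≤ f x)
    (hfi : Integrable f lam) :
    Antitone fun j => ∫ x in Ico l r ∩ φ ⁻¹' Jint k j, f x := by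
  refine antitone_nat_of_succ_le fun j => ?_
  have : (0 : ℝ) < k := Nat.cast_pos.2 hk
  simp only [Jint, Nat.cast_succ]
  refine h.setIntegral_inter_preimage_le_of_antitoneOn (hf.mono hlr) (fun x hx => hf0 x (hlr hx))
    (integrableOn_of_integrable_lam hfi hlr) (by positivity) ?_ (le_of_eq ?_)
  · gcongr
    linarith
  · ring

theorem mul_setIntegral_inter_preimage_Jint_le (h : IsConvexBranch φ l r s) (hk : 0 < k)
    (hlr : Ico l r ⊆ Icc 0 1) (hfi : Integrable f lam) (hB : 0 ≤ B)
    (hfB : ∀ᵐ x ∂lam, x ∈ Ico l r → f x ≤ B) (j : ℕ) :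
    k * ∫ x in Ico l r ∩ φ ⁻¹' Jint k j, f x ≤ B / s := by
  have hk' : (0 : ℝ) < k := Nat.cast_pos.2 hk
  have hfB' : ∀ᵐ x, x ∈ Ico l r → f x ≤ B :=
    ((ae_restrict_iff' measurableSet_Icc).1 hfB).mono fun x hx hxlr => hx (hlr hxlr) hxlr
  calc k * ∫ x in Ico l r ∩ φ ⁻¹' Jint k j, f x
      ≤ k * (((j + 1) / k - j / k) / s * B) :=
        mul_le_mul_of_nonneg_left (h.setIntegral_inter_preimage_le
          (integrableOn_of_integrable_lam hfi hlr) hB hfB' (by gcongr; linarith)) hk'.le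
    _ = B / s := by
        rw [← sub_div, add_sub_cancel_left]
        field_simp

theorem mul_setIntegral_inter_preimage_Jint_le_of_antitoneOn (h : IsConvexBranch φ l r s)
    (hk : 0 < k) (hl : 0 < l) (hr : r ≤ 1) (hf : AntitoneOn f (Icc 0 1))
    (hf0 : ∀ x ∈ Icc (0 : ℝ) 1, 0 ≤ f x) (hfi : Integrable f lam) (j : ℕ) :
    k * ∫ x in Ico l r ∩ φ ⁻¹' Jint k j, f x ≤ 1 / (l * s) * ∫ x, f x ∂lam := by
  have hint : 0 ≤ ∫ x, f x ∂lam :=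
    integral_nonneg_of_ae (ae_lam_mem_Ico.mono fun x hx => hf0 x (Ico_subset_Icc_self hx))
  rw [one_div_mul_eq_div, ← div_div]
  exact h.mul_setIntegral_inter_preimage_Jint_le hk
    (fun x hx => ⟨hl.le.trans hx.1, hx.2.le.trans hr⟩) hfi (div_nonneg hint hl.le)
    (.of_forall fun x hx =>
      le_integral_div_of_antitoneOn hf hf0 hfi hl hx.1 (hx.2.le.trans hr)) j

end IsConvexBranch

theorem isConvexBranch_div {c : ℝ} (hc : 0 < c) : IsConvexBranch (fun x => x / c) 0 c (1 / c) where
  lt := hc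
  continuousOn := (continuous_id.div_const c).continuousOn
  convexOn := by
    simpa only [div_eq_inv_mul, smul_eq_mul, id_eq] using
      (convexOn_id (𝕜 := ℝ) (convex_Ico 0 c)).smul (inv_nonneg.2 hc.le)
  map_left := zero_div c
  slope_pos := one_div_pos.2 hc
  hasDerivWithinAt := ((hasDerivAt_id 0).div_const c).hasDerivWithinAt

theorem setIntegral_inter_preimage_div_Jint_pos {f : ℝ → ℝ} {c : ℝ} {k m : ℕ} (hc0 : 0 < c)
    (hc1 : c < 1) (hm : m + 1 < k) (hf0 : ∀ x ∈ Ico 0 c, 0 ≤ f x)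
    (hfpos : ∀ x ∈ Ico 0 ((m + 1 : ℝ) / k), 0 < f x) (hfi : IntegrableOn f (Ico 0 c)) :
    0 < ∫ x in Ico 0 c ∩ (fun x => x / c) ⁻¹' Jint k (m + 1), f x := by
  have hk : (0 : ℝ) < k := Nat.cast_pos.2 (by lia)
  set p : ℝ := (m + 1) / k with hp
  set q : ℝ := (m + 1 + 1) / k with hq
  have hp0 : 0 < p := by positivity
  have hpq : p < q := by
    rw [hp, hq]
    gcongr
    linarith
  have hq1 : q ≤ 1 := div_le_one_of_le₀ (by exact_mod_cast hm) hk.le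
  have hsub : Ico (c * p) (min (c * q) p) ⊆
      Function.support f ∩ (Ico 0 c ∩ (fun x => x / c) ⁻¹' Jint k (m + 1)) := fun x hx => by
    have hxq : x < c * q := hx.2.trans_le (min_le_left _ _)
    have hx0 : 0 ≤ x := (by positivity : 0 ≤ c * p).trans hx.1
    refine ⟨(hfpos x ⟨hx0, hx.2.trans_le (min_le_right _ _)⟩).ne',
      ⟨hx0, hxq.trans_le (mul_le_of_le_one_right hc0.le hq1)⟩, ?_⟩
    rw [mem_preimage, Jint, mem_Ico, le_div_iff₀' hc0, div_lt_iff₀' hc0, Nat.cast_succ]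
    exact ⟨hx.1, hxq⟩
  have hmeas : MeasurableSet (Ico 0 c ∩ (fun x => x / c) ⁻¹' Jint k (m + 1)) :=
    (isConvexBranch_div hc0).measurableSet_inter_preimage _ _
  rw [setIntegral_pos_iff_support_of_nonneg_ae
    (ae_restrict_of_forall_mem hmeas fun x hx => hf0 x hx.1) (hfi.mono_set inter_subset_left)]
  refine lt_of_lt_of_le ?_ (measure_mono hsub)
  rw [Real.volume_Ico, ENNReal.ofReal_pos, sub_pos, lt_min_iff]
  exact ⟨mul_lt_mul_of_pos_left hpq hc0, mul_lt_of_lt_one_left hp0 hc1⟩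

theorem setIntegral_restrict_lam_preimage {σ φ f : ℝ → ℝ} {s J : Set ℝ} (hs : MeasurableSet s)
    (hs01 : s ⊆ Icc 0 1) (hσφ : EqOn σ φ s) :
    ∫ x in s, f x ∂(lam.restrict (σ ⁻¹' J)) = ∫ x in s ∩ φ ⁻¹' J, f x := by
  rw [Measure.restrict_restrict hs, hσφ.inter_preimage_eq,
    setIntegral_lam (inter_subset_left.trans hs01)]

theorem exists_mem_Ico_succ {a : ℕ → ℝ} {n : ℕ} {x : ℝ} (hx : x ∈ Ico (a n) (a 0)) :
    ∃ m, x ∈ Ico (a (m + 1)) (a m) := by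
  induction n with
  | zero => exact absurd hx.2 hx.1.not_gt
  | succ n ih =>
    rcases le_or_gt (a n) x with hnx | hxn
    · exact ih ⟨hnx, hx.2⟩
    · exact ⟨n, hx.1, hxn⟩

namespace PCApprox

variable {τ f : ℝ → ℝ} {a d : ℕ → ℝ} {N n k m : ℕ}

theorem pos (hτ : PCApprox τ a d N) (m : ℕ) : 0 < a m :=
  (hτ.a_anti.antitone.le_of_tendsto hτ.a_lim (m + 1)).trans_lt (hτ.a_anti m.lt_succ_self)

theorem le_one (hτ : PCApprox τ a d N) (m : ℕ) : a m ≤ 1 :=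
  hτ.a_zero ▸ hτ.a_anti.antitone m.zero_le

theorem lt_one (hτ : PCApprox τ a d N) (hn : N ≤ n) : a n < 1 :=
  hτ.a_zero ▸ hτ.a_anti (hτ.N_pos.trans hn)

theorem Ico_succ_subset_Icc (hτ : PCApprox τ a d N) (m : ℕ) :
    Ico (a (m + 1)) (a m) ⊆ Icc 0 1 := fun _ hx =>
  ⟨(hτ.pos (m + 1)).le.trans hx.1, hx.2.le.trans (hτ.le_one m)⟩

theorem Ico_zero_subset_Icc (hτ : PCApprox τ a d N) (n : ℕ) : Ico 0 (a n) ⊆ Icc 0 1 := fun _ hx =>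
  ⟨hx.1, hx.2.le.trans (hτ.le_one n)⟩

theorem D₁_nonneg (hτ : PCApprox τ a d N) : 0 ≤ D₁ d N :=
  tsum_nonneg fun m => (one_div_pos.2 (hτ.d_pos (m + N))).le

theorem sum_range_le_D₁ (hτ : PCApprox τ a d N) (n : ℕ) :
    ∑ m ∈ Finset.range n, 1 / d (m + N + 1) ≤ D₁ d N :=
  ((summable_nat_add_iff N).2 hτ.sum_d).sum_le_tsum _
    fun m _ => (one_div_pos.2 (hτ.d_pos (m + N))).le

theorem isConvexBranch (hτ : PCApprox τ a d N) (m : ℕ) :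
    IsConvexBranch τ (a (m + 1)) (a m) (d (m + 1)) where
  lt := hτ.a_anti m.lt_succ_self
  continuousOn := hτ.cont m
  convexOn := hτ.conv m
  map_left := hτ.map_a m
  slope_pos := hτ.d_pos m
  hasDerivWithinAt := hτ.deriv_a m

theorem exists_mem_Ico (hτ : PCApprox τ a d N) {x : ℝ} (hx : x ∈ Ioo (0 : ℝ) 1) :
    ∃ m, x ∈ Ico (a (m + 1)) (a m) := by
  obtain ⟨n, hn⟩ := (hτ.a_lim.eventually_lt_const hx.1).exists
  exact exists_mem_Ico_succ ⟨hn.le, hτ.a_zero ▸ hx.2⟩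

theorem mapsTo_Ioo (hτ : PCApprox τ a d N) : MapsTo τ (Ioo 0 1) (Ico 0 1) := fun x hx => by
  obtain ⟨m, hm⟩ := hτ.exists_mem_Ico hx
  exact ⟨(hτ.isConvexBranch m).nonneg hm, (hτ.isConvexBranch m).map_lt_of_forall_le
    (fun y hy => (hτ.mapsTo (hτ.Ico_succ_subset_Icc m hy)).2) hm⟩

theorem mapsTo_tauN (hτ : PCApprox τ a d N) (n : ℕ) :
    MapsTo (tauN τ a n) (Ico 0 1) (Ico 0 1) := fun x hx => by
  rw [tauN]
  split_ifs with hxn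
  · exact ⟨div_nonneg hx.1 (hτ.pos n).le, (div_lt_one (hτ.pos n)).2 hxn⟩
  · exact hτ.mapsTo_Ioo ⟨(hτ.pos n).trans_le (not_lt.1 hxn), hx.2⟩

theorem aemeasurable (hτ : PCApprox τ a d N) : AEMeasurable τ lam := by
  have hpieces : AEMeasurable τ (volume.restrict (⋃ m, Ico (a (m + 1)) (a m))) :=
    aemeasurable_iUnion_iff.2 fun m => (hτ.cont m).aemeasurable measurableSet_Ico
  rw [lam, ← restrict_Ioo_eq_restrict_Icc]
  exact hpieces.mono_set fun x hx => mem_iUnion.2 (hτ.exists_mem_Ico hx)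

theorem aemeasurable_tauN (hτ : PCApprox τ a d N) (n : ℕ) : AEMeasurable (tauN τ a n) lam := by
  obtain ⟨τ', hτ', hae⟩ := hτ.aemeasurable
  exact ⟨tauN τ' a n, Measurable.ite measurableSet_Iio (measurable_id.div_const _) hτ',
    hae.mono fun x hx => by simp only [tauN, hx]⟩

theorem setIntegral_tauN_preimage (hτ : PCApprox τ a d N) (hf : Integrable f lam) (n : ℕ)
    (J : Set ℝ) :
    ∫ x in tauN τ a n ⁻¹' J, f x ∂lam
      = (∑ m ∈ Finset.range n, ∫ x in Ico (a (m + 1)) (a m) ∩ τ ⁻¹' J, f x)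
        + ∫ x in Ico 0 (a n) ∩ (fun x => x / a n) ⁻¹' J, f x := by
  set μ := lam.restrict (tauN τ a n ⁻¹' J)
  have hfμ : Integrable f μ := hf.restrict
  have htail {m : ℕ} (hm : m < n) : EqOn (tauN τ a n) τ (Ico (a (m + 1)) (a m)) := fun x hx =>
    if_neg ((hτ.a_anti.antitone hm).trans hx.1).not_gt
  have hhead : EqOn (tauN τ a n) (fun x => x / a n) (Ico 0 (a n)) := fun x hx => if_pos hx.2
  calc ∫ x, f x ∂μ
      = ∫ x in Ico (a n) (a 0) ∪ Ico 0 (a n), f x ∂μ := by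
        rw [union_comm, Ico_union_Ico_eq_Ico (hτ.pos n).le (hτ.a_anti.antitone n.zero_le),
          hτ.a_zero, Measure.restrict_eq_self_of_ae_mem (ae_restrict_of_ae ae_lam_mem_Ico)]
    _ = ∫ x in Ico (a n) (a 0), f x ∂μ + ∫ x in Ico 0 (a n), f x ∂μ :=
        setIntegral_union Ico_disjoint_Ico_same.symm measurableSet_Ico
          hfμ.integrableOn hfμ.integrableOn
    _ = _ := by
        rw [setIntegral_Ico_eq_sum hτ.a_anti.antitone hfμ, setIntegral_restrict_lam_preimage
          measurableSet_Ico (hτ.Ico_zero_subset_Icc n) hhead]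
        congr 1
        exact Finset.sum_congr rfl fun m hm => setIntegral_restrict_lam_preimage
          measurableSet_Ico (hτ.Ico_succ_subset_Icc m) (htail (Finset.mem_range.1 hm))

theorem antitone_ulamCoeff (hτ : PCApprox τ a d N) (n : ℕ) (hk : 0 < k)
    (hf : AntitoneOn f (Icc 0 1)) (hf0 : ∀ x ∈ Icc (0 : ℝ) 1, 0 ≤ f x) (hfi : Integrable f lam) :
    Antitone (ulamCoeff (tauN τ a n) k f) := fun i j hij => by
  rw [ulamCoeff, ulamCoeff, hτ.setIntegral_tauN_preimage hfi, hτ.setIntegral_tauN_preimage hfi]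
  refine mul_le_mul_of_nonneg_left
    (add_le_add (Finset.sum_le_sum fun m _ => ?_) ?_) k.cast_nonneg
  · exact (hτ.isConvexBranch m).antitone_setIntegral_inter_preimage_Jint hk
      (hτ.Ico_succ_subset_Icc m) hf hf0 hfi hij
  · exact (isConvexBranch_div (hτ.pos n)).antitone_setIntegral_inter_preimage_Jint hk
      (hτ.Ico_zero_subset_Icc n) hf hf0 hfi hij

theorem ulamCoeff_le (hτ : PCApprox τ a d N) (hn : N ≤ n) (hk : 0 < k)
    (hf : AntitoneOn f (Icc 0 1)) (hf0 : ∀ x ∈ Icc (0 : ℝ) 1, 0 ≤ f x) (hfi : Integrable f lam)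
    {M : ℝ} (hM : 0 ≤ M) (hfM : ∀ᵐ x ∂lam, f x ≤ M) (j : ℕ) :
    ulamCoeff (tauN τ a n) k f j ≤ (a n + D₁ d N) * M + Dconst a d N * ∫ x, f x ∂lam := by
  set I := ∫ x, f x ∂lam
  have hfirst (m : ℕ) : k * ∫ x in Ico (a (m + 1)) (a m) ∩ τ ⁻¹' Jint k j, f x
      ≤ 1 / (a (m + 1) * d (m + 1)) * I :=
    (hτ.isConvexBranch m).mul_setIntegral_inter_preimage_Jint_le_of_antitoneOn hk
      (hτ.pos (m + 1)) (hτ.le_one m) hf hf0 hfi j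
  have hrest (m : ℕ) : k * ∫ x in Ico (a (m + 1)) (a m) ∩ τ ⁻¹' Jint k j, f x
      ≤ 1 / d (m + 1) * M := by
    rw [one_div_mul_eq_div]
    exact (hτ.isConvexBranch m).mul_setIntegral_inter_preimage_Jint_le hk
      (hτ.Ico_succ_subset_Icc m) hfi hM (hfM.mono fun x hx _ => hx) j
  have hhead : k * ∫ x in Ico 0 (a n) ∩ (fun x => x / a n) ⁻¹' Jint k j, f x ≤ a n * M := by
    refine ((isConvexBranch_div (hτ.pos n)).mul_setIntegral_inter_preimage_Jint_le hk
      (hτ.Ico_zero_subset_Icc n) hfi hM (hfM.mono fun x hx _ => hx) j).trans_eq ?_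
    rw [div_div_eq_mul_div, div_one, mul_comm]
  obtain ⟨i, hi⟩ := Nat.exists_eq_add_of_le hn
  calc ulamCoeff (tauN τ a n) k f j
      = (∑ m ∈ Finset.range N, k * ∫ x in Ico (a (m + 1)) (a m) ∩ τ ⁻¹' Jint k j, f x)
        + (∑ m ∈ Finset.range i,
            k * ∫ x in Ico (a (N + m + 1)) (a (N + m)) ∩ τ ⁻¹' Jint k j, f x)
        + k * ∫ x in Ico 0 (a n) ∩ (fun x => x / a n) ⁻¹' Jint k j, f x := by
        rw [ulamCoeff, hτ.setIntegral_tauN_preimage hfi, mul_add, Finset.mul_sum,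
          ← Finset.sum_range_add, ← hi]
    _ ≤ (∑ m ∈ Finset.range N, 1 / (a (m + 1) * d (m + 1)) * I)
        + (∑ m ∈ Finset.range i, 1 / d (N + m + 1) * M) + a n * M :=
        add_le_add (add_le_add (Finset.sum_le_sum fun m _ => hfirst m)
          (Finset.sum_le_sum fun m _ => hrest (N + m))) hhead
    _ = Dconst a d N * I + (∑ m ∈ Finset.range i, 1 / d (m + N + 1)) * M + a n * M := by
        simp only [Dconst, Finset.sum_mul, add_comm N]
    _ ≤ Dconst a d N * I + D₁ d N * M + a n * M := by
        gcongr
        exact hτ.sum_range_le_D₁ i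
    _ = (a n + D₁ d N) * M + Dconst a d N * I := by ring

theorem ulamCoeff_succ_pos (hτ : PCApprox τ a d N) (hn : N ≤ n) (hm : m + 1 < k)
    (hf0 : ∀ x ∈ Icc (0 : ℝ) 1, 0 ≤ f x) (hfpos : ∀ x ∈ Ico 0 ((m + 1 : ℝ) / k), 0 < f x)
    (hfi : Integrable f lam) : 0 < ulamCoeff (tauN τ a n) k f (m + 1) := by
  have hhead := hτ.Ico_zero_subset_Icc n
  rw [ulamCoeff, hτ.setIntegral_tauN_preimage hfi]
  refine mul_pos (Nat.cast_pos.2 (by lia)) (add_pos_of_nonneg_of_pos ?_ ?_)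
  · exact Finset.sum_nonneg fun b _ => setIntegral_nonneg
      ((hτ.isConvexBranch b).measurableSet_inter_preimage _ _)
      fun x hx => hf0 x (hτ.Ico_succ_subset_Icc b hx.1)
  · exact setIntegral_inter_preimage_div_Jint_pos (hτ.pos n) (hτ.lt_one hn) hm
      (fun x hx => hf0 x (hhead hx)) hfpos (integrableOn_of_integrable_lam hfi hhead)

theorem isMonotoneMarkov_ulamOp (hτ : PCApprox τ a d N) (hn : N ≤ n) (hk : 0 < k) :
    IsMonotoneMarkov k (ulamOp (tauN τ a n) k) where
  antitone_map hu hu0 := hτ.antitone_ulamCoeff n hk ((antitone_ulamStep hu).antitoneOn _)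
    (fun _ _ => hu0 _) (integrable_ulamStep k _)
  map_eq_zero _ _ hj := ulamCoeff_eq_zero hk (hτ.mapsTo_tauN n) hj
  sum_map u := (sum_ulamCoeff hk (hτ.mapsTo_tauN n) (hτ.aemeasurable_tauN n)
    (integrable_ulamStep k u)).trans (mul_integral_ulamStep hk u)
  map_succ_pos {u m} hu hu0 hm hum := by
    refine hτ.ulamCoeff_succ_pos hn hm (fun _ _ => hu0 _) (fun x hx => ?_) (integrable_ulamStep k u)
    have hfloor : ⌊k * x⌋₊ < m + 1 := by
      rw [Nat.floor_lt (mul_nonneg k.cast_nonneg hx.1), Nat.cast_succ]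
      exact (lt_div_iff₀' (Nat.cast_pos.2 hk)).1 hx.2
    exact hum.trans_le (hu (Nat.le_of_lt_succ hfloor))

theorem esssup_Qk_le (hτ : PCApprox τ a d N) (hn : N ≤ n) (hk : 0 < k) {g : ℝ → ℝ}
    (hf : AntitoneOn f (Icc 0 1)) (hf0 : ∀ x ∈ Icc (0 : ℝ) 1, 0 ≤ f x) (hfi : Integrable f lam)
    (hg : IsPerronImage (tauN τ a n) f g) :
    esssup (Qk k g) ≤ ENNReal.ofReal (a n + D₁ d N) * esssup f
      + ENNReal.ofReal (Dconst a d N * ∫ x, |f x| ∂lam) := by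
  have hcoeff : 0 < a n + D₁ d N := add_pos_of_pos_of_nonneg (hτ.pos n) hτ.D₁_nonneg
  rcases eq_or_ne (esssup f) ⊤ with htop | htop
  · rw [htop, ENNReal.mul_top (ENNReal.ofReal_pos.2 hcoeff).ne', top_add]
    exact le_top
  have hfM : ∀ᵐ x ∂lam, f x ≤ (esssup f).toReal := by
    filter_upwards [ae_le_essSup (μ := lam) (f := fun x => ENNReal.ofReal (f x))] with x hx
    exact (ENNReal.ofReal_le_iff_le_toReal htop).1 hx
  have habs : ∫ x, |f x| ∂lam = ∫ x, f x ∂lam :=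
    integral_congr_ae <|
      ae_lam_mem_Ico.mono fun x hx => abs_of_nonneg (hf0 x (Ico_subset_Icc_self hx))
  refine essSup_le_of_ae_le _ ?_
  filter_upwards [hg.Qk_ae_eq hk] with x hx
  calc ENNReal.ofReal (Qk k g x)
      ≤ ENNReal.ofReal ((a n + D₁ d N) * (esssup f).toReal + Dconst a d N * ∫ x, f x ∂lam) := by
        rw [hx]
        exact ENNReal.ofReal_le_ofReal
          (hτ.ulamCoeff_le hn hk hf hf0 hfi ENNReal.toReal_nonneg hfM _)
    _ ≤ _ := ENNReal.ofReal_add_le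
    _ = _ := by rw [ENNReal.ofReal_mul hcoeff.le, ENNReal.ofReal_toReal htop, habs]

theorem le_of_ulamOp_eq (hτ : PCApprox τ a d N) (hn : N ≤ n) (hk : 0 < k)
    (hcontr : a n + D₁ d N < 1) {w : ℕ → ℝ} (hw : ulamOp (tauN τ a n) k w = w)
    (hsum : ∑ j ∈ Finset.range k, w j = k) (j : ℕ) :
    0 ≤ w j ∧ w j ≤ Dconst a d N / (1 - (a n + D₁ d N)) := by
  have hk' : (0 : ℝ) < k := Nat.cast_pos.2 hk
  have hT := hτ.isMonotoneMarkov_ulamOp hn hk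
  have hanti : Antitone w := hT.antitone_of_map_eq hk hw (hsum ▸ hk')
  have hw0 : 0 ≤ w := nonneg_of_antitone_of_eq_zero hanti fun j hj => hw ▸ hT.map_eq_zero w hj
  have hint : ∫ x, ulamStep k w x ∂lam = 1 :=
    mul_left_cancel₀ hk'.ne' (by rw [mul_integral_ulamStep hk, hsum, mul_one])
  have hbound : ulamOp (tauN τ a n) k w 0 ≤ _ := hτ.ulamCoeff_le hn hk
    ((antitone_ulamStep hanti).antitoneOn _) (fun _ _ => hw0 _) (integrable_ulamStep k w) (hw0 0)
    (.of_forall fun _ => hanti (Nat.zero_le _)) 0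
  rw [hw, hint, mul_one] at hbound
  refine ⟨hw0 j, (hanti j.zero_le).trans ?_⟩
  rw [le_div_iff₀ (sub_pos.2 hcontr)]
  linarith

theorem nonneg_and_esssup_le_of_Qk_ae_eq (hτ : PCApprox τ a d N) (hn : N ≤ n) (hk : 0 < k)
    (hcontr : a n + D₁ d N < 1) {g : ℝ → ℝ} (hf1 : ∫ x, f x ∂lam = 1)
    (hg : IsPerronImage (tauN τ a n) f g) (hfix : Qk k g =ᵐ[lam] f) :
    0 ≤ᵐ[lam] f ∧ esssup f ≤ ENNReal.ofReal (Dconst a d N / (1 - (a n + D₁ d N))) := by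
  set w := ulamCoeff (tauN τ a n) k f
  have hstep : ulamStep k w =ᵐ[lam] f := (hg.Qk_ae_eq hk).symm.trans hfix
  have hw : ulamOp (tauN τ a n) k w = w := ulamCoeff_congr_ae hstep
  have hsum : ∑ j ∈ Finset.range k, w j = k := by
    rw [← mul_integral_ulamStep hk, integral_congr_ae hstep, hf1, mul_one]
  have hbound := hτ.le_of_ulamOp_eq hn hk hcontr hw hsum
  exact ⟨hstep.mono fun _ hx => hx ▸ (hbound _).1,
    essSup_le_of_ae_le _ <| hstep.mono fun _ hx =>
      ENNReal.ofReal_le_ofReal (hx ▸ (hbound _).2)⟩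

end PCApprox

theorem stmt14_general {τ : ℝ → ℝ} {a d : ℕ → ℝ} {N : ℕ} (hτ : PCApprox τ a d N) {n k : ℕ}
    (hn : N ≤ n) (hk : 1 ≤ k) :
    (∀ f g : ℝ → ℝ, Integrable f lam → (∀ x ∈ Icc (0 : ℝ) 1, 0 ≤ f x) →
      AntitoneOn f (Icc 0 1) → IsPerronImage (tauN τ a n) f g →
      esssup (Qk k g) ≤ ENNReal.ofReal (a n + D₁ d N) * esssup f
        + ENNReal.ofReal (Dconst a d N * ∫ x, |f x| ∂lam)) ∧
    (a n + D₁ d N < 1 → ∀ f g : ℝ → ℝ, ∫ x, f x ∂lam = 1 →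
      IsPerronImage (tauN τ a n) f g → Qk k g =ᵐ[lam] f →
      0 ≤ᵐ[lam] f ∧ esssup f ≤ ENNReal.ofReal (Dconst a d N / (1 - (a n + D₁ d N)))) :=
  ⟨fun _ _ hfi hf0 hf hg => hτ.esssup_Qk_le hn hk hf hf0 hfi hg,
   fun hcontr _ _ hf1 hg hfix => hτ.nonneg_and_esssup_le_of_Qk_ae_eq hn hk hcontr hf1 hg hfix⟩

/-- (i) For `n ≥ N` with `a n + D₁ < 1`, `k ≥ 1`, and every non-negative, non-increasing
`f ∈ L¹` with `g` a version of `P_{τ_n} f`: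
`ess sup (Q^{(k)}(P_{τ_n} f)) ≤ (a n + D₁) · ess sup f + D · ‖f‖₁`.
(ii) Consequently every normalized fixed point `f_{n,k}` of `P^{(k)}_{τ_n}` satisfies
`ess sup f_{n,k} ≤ D / (1 − (a n + D₁))`. -/
theorem stmt14 (τ : ℝ → ℝ) (a d : ℕ → ℝ) (N : ℕ)
    (hτ : PCApprox τ a d N) (n k : ℕ) (hn : N ≤ n) (hcontr : a n + D₁ d N < 1)
    (hk : 1 ≤ k) :
    (∀ f g : ℝ → ℝ, MeasureTheory.Integrable f lam → MeasureTheory.Integrable g lam →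
      (∀ x ∈ Set.Icc (0:ℝ) 1, 0 ≤ f x) → AntitoneOn f (Set.Icc 0 1) →
      (∀ A : Set ℝ, MeasurableSet A → A ⊆ Set.Icc (0:ℝ) 1 →
        ∫ x in A, g x ∂lam = ∫ x in (tauN τ a n) ⁻¹' A, f x ∂lam) →
      esssup (Qk k g) ≤ ENNReal.ofReal (a n + D₁ d N) * esssup f
        + ENNReal.ofReal (Dconst a d N * ∫ x, |f x| ∂lam)) ∧
    (∀ fnk : ℝ → ℝ, IsUlamFixed (tauN τ a n) k fnk →
      esssup fnk ≤ ENNReal.ofReal (Dconst a d N / (1 - (a n + D₁ d N)))) := by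
  obtain ⟨hestimate, hfixed⟩ := stmt14_general hτ hn hk
  exact ⟨fun f g hf hg hf0 hfa hP => hestimate f g hf hf0 hfa ⟨hg, hP⟩,
    fun fnk ⟨_, _, _, hint, g, hg, hP, hfix⟩ => (hfixed hcontr fnk g hint ⟨hg, hP⟩ hfix).2⟩
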